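/- Let n ≥ 5 with n ≠ 6, and let Y ⊆ S_n be a totally symmetric set of cardinality n − 1. Then Y is conjugate to X_n, i.e., there exists g ∈ S_n with g X_n g⁻¹ = Y. -/

import Mathlib

/-- A subset `X` of a group `G` is *totally symmetric* if every permutation of `X`
can be realized by conjugation by an element of `G`. -/
def IsTotallySymmetric {G : Type*} [Group G] (X : Set G) : Prop :=
  ∀ π : X ≃ X, ∃ g : G, ∀ x : X, g * (x : G) * g⁻¹ = ((π x : X) : G)

/-!
Let `x` belong to a totally symmetric set `X` with `m ≥ 4` elements. Each of the `(m - 1)!`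
permutations of `X` fixing `x` is conjugation by an element of the centralizer of `x`. Two elements
of the centralizer that agree up to a power of `x` induce the same permutation: the permutation
induced by a power of `x` is central among those fixing `x`, hence trivial. So the centralizer of
`x` has order at least `(m - 1)! * orderOf x`.

In a symmetric group of degree `n`, a permutation moving `s` points has a centralizer of order at
most `(n - s)! * s‼`. For `m ≥ n - 1` the two bounds leave only `s = 2`, so `X` consists of
transpositions. If two of their supports were disjoint, then by symmetry all of them would be, and
there are too few points for that. Four or more pairwise intersecting pairs share a point, because
three pairwise intersecting pairs without a common point form a triangle, which no further pair can
meet in all three sides. The transpositions moving a given point number only `n - 1`, so `X`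
contains all of them.
-/

open Equiv Equiv.Perm Subgroup
open scoped Nat

lemma ncard_triple_le {α : Type*} (a b c : α) : ({a, b, c} : Set α).ncard ≤ 3 := by
  calc ({a, b, c} : Set α).ncard ≤ ({b, c} : Set α).ncard + 1 := Set.ncard_insert_le a _
    _ ≤ ({c} : Set α).ncard + 1 + 1 := Nat.succ_le_succ (Set.ncard_insert_le b _)
    _ = 3 := by rw [Set.ncard_singleton]

namespace IsTotallySymmetric

variable {G : Type*} [Group G] {X : Set G}

lemma exists_conj_eq_and_conj_eq (hX : IsTotallySymmetric X) {x y x' y' : G} (hx : x ∈ X)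
    (hy : y ∈ X) (hx' : x' ∈ X) (hy' : y' ∈ X) (hxy : x ≠ y) (hxy' : x' ≠ y') :
    ∃ g : G, g * x * g⁻¹ = x' ∧ g * y * g⁻¹ = y' := by
  obtain ⟨π, hπx, hπy⟩ := MulAction.is_two_pretransitive_iff.1
    (Equiv.Perm.isMultiplyPretransitive X 2)
    (Subtype.coe_ne_coe.1 hxy : (⟨x, hx⟩ : X) ≠ ⟨y, hy⟩)
    (Subtype.coe_ne_coe.1 hxy' : (⟨x', hx'⟩ : X) ≠ ⟨y', hy'⟩)
  obtain ⟨g, hg⟩ := hX π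
  exact ⟨g, (hg ⟨x, hx⟩).trans (congrArg _ hπx), (hg ⟨y, hy⟩).trans (congrArg _ hπy)⟩

lemma one_notMem (hX : IsTotallySymmetric X) (hnt : X.Nontrivial) : 1 ∉ X := by
  intro h1
  obtain ⟨y, hy, hy1⟩ := hnt.exists_ne 1
  obtain ⟨g, hg, -⟩ := hX.exists_conj_eq_and_conj_eq h1 hy hy h1 hy1.symm hy1
  exact hy1 (by simpa using hg.symm)

/-- If `w` moved `y` to `y' ≠ y`, some `g` centralizing `x`, hence commuting with `w`, would fix `y`
and move `y'`. -/
lemma conj_eq_self_of_mem_centralizer_centralizer (hX : IsTotallySymmetric X)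
    (hcard : 4 ≤ X.ncard) {x y w : G} (hx : x ∈ X) (hy : y ∈ X)
    (hw : w ∈ centralizer (centralizer {x} : Set G)) (hwy : w * y * w⁻¹ ∈ X) :
    w * y * w⁻¹ = y := by
  by_contra hne
  have hwx : w * x * w⁻¹ = x :=
    mul_inv_eq_iff_eq_mul.2 (hw x (mem_centralizer_singleton_iff.2 rfl)).symm
  have hxy : x ≠ y := by
    rintro rfl
    exact hne hwx
  have hxy' : x ≠ w * y * w⁻¹ := fun h => hxy (MulAut.conj w |>.injective (hwx.trans h))
  obtain ⟨z, hz, hzmem⟩ : ∃ z ∈ X, z ∉ ({x, y, w * y * w⁻¹} : Set G) :=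
    Set.exists_mem_notMem_of_ncard_lt_ncard ((ncard_triple_le _ _ _).trans_lt hcard)
  simp only [Set.mem_insert_iff, Set.mem_singleton_iff, not_or] at hzmem
  obtain ⟨hzx, hzy, hzy'⟩ := hzmem
  classical
  obtain ⟨g, hg⟩ := hX (swap ⟨w * y * w⁻¹, hwy⟩ ⟨z, hz⟩)
  have hgx : g * x * g⁻¹ = x := by
    simpa [swap_apply_of_ne_of_ne, hxy', Ne.symm hzx] using hg ⟨x, hx⟩
  have hgy : g * y * g⁻¹ = y := by
    simpa [swap_apply_of_ne_of_ne, Ne.symm hne, Ne.symm hzy] using hg ⟨y, hy⟩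
  have hgw : g * w = w * g :=
    hw g (mem_centralizer_singleton_iff.2 (mul_inv_eq_iff_eq_mul.1 hgx))
  refine hzy' ?_
  calc z = g * (w * y * w⁻¹) * g⁻¹ := by simpa using (hg ⟨w * y * w⁻¹, hwy⟩).symm
    _ = (g * w) * y * (g * w)⁻¹ := by group
    _ = w * (g * y * g⁻¹) * w⁻¹ := by rw [hgw]; group
    _ = w * y * w⁻¹ := by rw [hgy]

lemma eq_of_inv_mul_mem_centralizer_centralizer (hX : IsTotallySymmetric X)
    (hcard : 4 ≤ X.ncard) {x g h : G} (hx : x ∈ X) {σ τ : Perm X}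
    (hg : ∀ y : X, g * (y : G) * g⁻¹ = σ y) (hh : ∀ y : X, h * (y : G) * h⁻¹ = τ y)
    (hgh : h⁻¹ * g ∈ centralizer (centralizer {x} : Set G)) : σ = τ := by
  ext1 y
  have hconj : (h⁻¹ * g) * (y : G) * (h⁻¹ * g)⁻¹ = (τ⁻¹ (σ y) : X) := by
    calc (h⁻¹ * g) * (y : G) * (h⁻¹ * g)⁻¹ = h⁻¹ * (g * y * g⁻¹) * h := by group
      _ = h⁻¹ * (h * (τ⁻¹ (σ y) : X) * h⁻¹) * h := by rw [hg, hh, Perm.coe_inv, apply_symm_apply]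
      _ = (τ⁻¹ (σ y) : X) := by group
  have hfix := hX.conj_eq_self_of_mem_centralizer_centralizer hcard hx y.2 hgh
    (hconj ▸ Subtype.property _)
  exact Perm.inv_eq_iff_eq.1 (Subtype.ext (hconj.symm.trans hfix))

theorem factorial_mul_orderOf_le_card_centralizer [Finite G] (hX : IsTotallySymmetric X)
    (hcard : 4 ≤ X.ncard) {x : G} (hx : x ∈ X) :
    (X.ncard - 1)! * orderOf x ≤ Nat.card (centralizer {x}) := by
  classical
  choose g hg using fun σ : Perm {y : X // y ≠ ⟨x, hx⟩} => hX (ofSubtype σ)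
  have hgx (σ) : g σ ∈ centralizer {x} := by
    have hσ := hg σ ⟨x, hx⟩
    rw [ofSubtype_apply_of_not_mem σ (by simp)] at hσ
    exact mem_centralizer_singleton_iff.2 (mul_inv_eq_iff_eq_mul.1 hσ)
  have hzpowers : zpowers x ≤ centralizer {x} :=
    zpowers_le.2 (mem_centralizer_singleton_iff.2 rfl)
  have hzpowers' : zpowers x ≤ centralizer (centralizer {x} : Set G) :=
    zpowers_le.2 fun h hh => mem_centralizer_singleton_iff.1 hh
  let F : Perm {y : X // y ≠ ⟨x, hx⟩} × zpowers x → centralizer {x} := fun p =>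
    ⟨g p.1 * p.2, mul_mem (hgx p.1) (hzpowers p.2.2)⟩
  have hF : F.Injective := by
    rintro ⟨σ, u⟩ ⟨τ, v⟩ h
    replace h : g σ * u = g τ * v := congrArg Subtype.val h
    have hinv : (g τ)⁻¹ * g σ = v * (u : G)⁻¹ := by
      rw [eq_mul_inv_iff_mul_eq, mul_assoc, h, inv_mul_cancel_left]
    have hmem : (g τ)⁻¹ * g σ ∈ centralizer (centralizer {x} : Set G) :=
      hzpowers' (hinv ▸ mul_mem v.2 (inv_mem u.2))
    obtain rfl : σ = τ := ofSubtype_injective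
      (hX.eq_of_inv_mul_mem_centralizer_centralizer hcard hx (hg σ) (hg τ) hmem)
    simpa using h
  have hcardX : Nat.card {y : X // y ≠ ⟨x, hx⟩} = X.ncard - 1 := by
    rw [← Nat.card_coe_set_eq X, ← Set.ncard_singleton (⟨x, hx⟩ : X), ← Set.ncard_compl]
    rfl
  simpa [Nat.card_prod, Nat.card_perm, Nat.card_zpowers, hcardX] using
    Nat.card_le_card_of_injective F hF

end IsTotallySymmetric

section CentralizerBound

lemma doubleFactorial_monotone : Monotone Nat.doubleFactorial := by
  refine monotone_nat_of_le_succ fun s => ?_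
  induction s using Nat.twoStepInduction with
  | zero => decide
  | one => decide
  | more s ih _ => exact Nat.mul_le_mul (by omega) ih

lemma mul_count_le_sum (m : Multiset ℕ) (a : ℕ) : a * m.count a ≤ m.sum := by
  obtain ⟨u, hu⟩ := Multiset.le_iff_exists_add.1
    (Multiset.le_count_iff_replicate_le.1 (le_refl (m.count a)))
  calc a * m.count a = (Multiset.replicate (m.count a) a).sum := by
        rw [Multiset.sum_replicate, smul_eq_mul, mul_comm]
    _ ≤ (Multiset.replicate (m.count a) a).sum + u.sum := Nat.le_add_right _ _
    _ = m.sum := by rw [← Multiset.sum_add, ← hu]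

lemma prod_count_factorial_cons {α : Type*} [DecidableEq α] (a : α) (m : Multiset α) :
    ∏ b ∈ (a ::ₘ m).toFinset, ((a ::ₘ m).count b)!
      = (m.count a + 1) * ∏ b ∈ m.toFinset, (m.count b)! := by
  have hcount (b : α) :
      ((a ::ₘ m).count b)! = (if b = a then m.count a + 1 else 1) * (m.count b)! := by
    split_ifs with h
    · rw [h, Multiset.count_cons_self, Nat.factorial_succ]
    · rw [Multiset.count_cons_of_ne h, one_mul]
  have hinsert : ∏ b ∈ insert a m.toFinset, (m.count b)! = ∏ b ∈ m.toFinset, (m.count b)! :=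
    Finset.prod_insert_of_eq_one_if_notMem fun h => by
      rw [Multiset.count_eq_zero_of_notMem (by simpa using h), Nat.factorial_zero]
  simp only [hcount, Finset.prod_mul_distrib, Multiset.toFinset_cons, hinsert,
    Finset.prod_ite_eq', Finset.mem_insert_self, if_true]

lemma prod_mul_prod_count_factorial_le (m : Multiset ℕ) (hm : ∀ a ∈ m, 2 ≤ a) :
    m.prod * ∏ a ∈ m.toFinset, (m.count a)! ≤ m.sum‼ := by
  induction m using Multiset.induction_on with
  | empty => simp
  | cons a m ih =>
    obtain ⟨c, rfl⟩ := Nat.exists_eq_add_of_le' (hm a (Multiset.mem_cons_self a m))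
    rw [prod_count_factorial_cons, Multiset.prod_cons, Multiset.sum_cons]
    calc (c + 2) * m.prod * ((m.count (c + 2) + 1) * ∏ b ∈ m.toFinset, (m.count b)!)
        = ((c + 2) * m.count (c + 2) + (c + 2)) * (m.prod * ∏ b ∈ m.toFinset, (m.count b)!) := by
          ring
      _ ≤ (m.sum + (c + 2)) * m.sum‼ := by
          gcongr
          · exact mul_count_le_sum m _
          · exact ih fun b hb => hm b (Multiset.mem_cons_of_mem hb)
      _ ≤ (m.sum + c + 2) * (m.sum + c)‼ :=
          Nat.mul_le_mul_left _ (doubleFactorial_monotone (Nat.le_add_right _ _))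
      _ = (c + 2 + m.sum)‼ := by rw [← Nat.doubleFactorial_add_two, add_assoc, add_comm]

theorem card_centralizer_le {α : Type*} [Fintype α] [DecidableEq α] (σ : Perm α) :
    Nat.card (centralizer {σ}) ≤ (Fintype.card α - σ.support.card)! * σ.support.card‼ := by
  rw [nat_card_centralizer, mul_assoc, ← sum_cycleType]
  exact Nat.mul_le_mul_left _
    (prod_mul_prod_count_factorial_le _ fun _ => two_le_of_mem_cycleType)

end CentralizerBound

section Numerics

lemma le_doubleFactorial (n : ℕ) : n ≤ n‼ := by
  cases n with
  | zero => exact Nat.zero_le _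
  | succ n =>
    rw [Nat.doubleFactorial_add_one]
    exact Nat.le_mul_of_pos_right _ (Nat.doubleFactorial_pos _)

lemma doubleFactorial_lt_two_mul_factorial_pred {s : ℕ} (hs : 3 ≤ s) : s‼ < 2 * (s - 1)! := by
  obtain ⟨t, rfl⟩ := Nat.exists_eq_add_of_le' hs
  have hlt : t + 3 < 2 * (t + 2)‼ := by
    have := le_doubleFactorial (t + 2)
    omega
  calc (t + 3)‼ = (t + 3) * (t + 1)‼ := Nat.doubleFactorial_add_two _
    _ < 2 * (t + 2)‼ * (t + 1)‼ := Nat.mul_lt_mul_of_pos_right hlt (Nat.doubleFactorial_pos _)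
    _ = 2 * (t + 2)! := by rw [Nat.factorial_eq_mul_doubleFactorial, mul_assoc]

lemma doubleFactorial_lt_two_mul_factorial_sub_two {s : ℕ} (hs : 7 ≤ s) :
    s‼ < 2 * (s - 2)! := by
  obtain ⟨t, rfl⟩ := Nat.exists_eq_add_of_le' hs
  have hlt : t + 7 < 2 * (t + 4)‼ := by
    rw [Nat.doubleFactorial_add_two]
    nlinarith [le_doubleFactorial (t + 2)]
  calc (t + 7)‼ = (t + 7) * (t + 5)‼ := Nat.doubleFactorial_add_two _
    _ < 2 * (t + 4)‼ * (t + 5)‼ := Nat.mul_lt_mul_of_pos_right hlt (Nat.doubleFactorial_pos _)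
    _ = 2 * (t + 5)! := by rw [Nat.factorial_eq_mul_doubleFactorial]; ring

lemma factorial_succ_mul_doubleFactorial_lt (f : ℕ) {s : ℕ} (hs : 3 ≤ s) :
    (f + 1)! * s‼ < 2 * (f + s - 1)! := by
  induction f with
  | zero => simpa using doubleFactorial_lt_two_mul_factorial_pred hs
  | succ f ih =>
    calc (f + 2)! * s‼ = (f + 2) * ((f + 1)! * s‼) := by rw [Nat.factorial_succ, mul_assoc]
      _ < (f + s) * (2 * (f + s - 1)!) := Nat.mul_lt_mul_of_le_of_lt (by omega) ih (by omega)
      _ = 2 * (f + s)! := by rw [mul_left_comm, Nat.mul_factorial_pred (by omega)]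
      _ = 2 * (f + 1 + s - 1)! := by congr 2; omega

lemma factorial_mul_doubleFactorial_lt {n s r : ℕ} (hs : 3 ≤ s) (hsn : s ≤ n) (hn : 5 ≤ n)
    (hn6 : n ≠ 6) (hr : 2 ≤ r) (hr_odd : Odd s → 3 ≤ r) : (n - s)! * s‼ < (n - 2)! * r := by
  obtain rfl | hlt := hsn.eq_or_lt
  · rw [Nat.sub_self, Nat.factorial_zero, one_mul]
    obtain rfl | h7 : s = 5 ∨ 7 ≤ s := by omega
    · calc 5‼ < (5 - 2)! * 3 := by decide
        _ ≤ (5 - 2)! * r := Nat.mul_le_mul_left _ (hr_odd (by decide))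
    · calc s‼ < 2 * (s - 2)! := doubleFactorial_lt_two_mul_factorial_sub_two h7
        _ ≤ (s - 2)! * r := by rw [mul_comm]; gcongr
  · obtain ⟨f, rfl⟩ := Nat.exists_eq_add_of_lt hlt
    calc (s + f + 1 - s)! * s‼ = (f + 1)! * s‼ := by congr 2; omega
      _ < 2 * (f + s - 1)! := factorial_succ_mul_doubleFactorial_lt f hs
      _ = (s + f + 1 - 2)! * 2 := by rw [mul_comm, add_comm f]; rfl
      _ ≤ (s + f + 1 - 2)! * r := Nat.mul_le_mul_left _ hr

end Numerics

section Swaps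

variable {α : Type*} [DecidableEq α]

/-- The set of transpositions moving `a`: the set `X_n` of the paper, based at an arbitrary point
`a` of an arbitrary type instead of at the point `1` of `{1, …, n}`. -/
def swapsAt (a : α) : Set (Perm α) :=
  {σ | ∃ i, i ≠ a ∧ σ = swap a i}

lemma conj_image_swapsAt (g : Perm α) (a : α) :
    (fun σ => g * σ * g⁻¹) '' swapsAt a = swapsAt (g a) := by
  ext σ
  constructor
  · rintro ⟨_, ⟨i, hi, rfl⟩, rfl⟩
    exact ⟨g i, g.injective.ne hi, (swap_apply_apply g a i).symm⟩
  · rintro ⟨j, hj, rfl⟩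
    obtain ⟨i, rfl⟩ := g.surjective j
    exact ⟨swap a i, ⟨i, ne_of_apply_ne g hj, rfl⟩, (swap_apply_apply g a i).symm⟩

variable [Fintype α]

lemma ncard_swapsAt_le (a : α) : (swapsAt a).ncard ≤ Fintype.card α - 1 := by
  have himage : swapsAt a = swap a '' {a}ᶜ := by
    ext σ
    simp [swapsAt, eq_comm]
  calc (swapsAt a).ncard ≤ ({a}ᶜ : Set α).ncard := himage ▸ Set.ncard_image_le
    _ = Fintype.card α - 1 := by rw [Set.ncard_compl, Set.ncard_singleton, Nat.card_eq_fintype_card]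

lemma mem_swapsAt_of_mem_support {σ : Perm α} {a : α} (hσ : σ.support.card = 2)
    (ha : a ∈ σ.support) : σ ∈ swapsAt a := by
  obtain ⟨b, c, hbc, rfl⟩ := card_support_eq_two.1 hσ
  rw [support_swap hbc, Finset.mem_insert, Finset.mem_singleton] at ha
  rcases ha with rfl | rfl
  · exact ⟨c, hbc.symm, rfl⟩
  · exact ⟨b, hbc, swap_comm _ _⟩

lemma injOn_support_of_card_eq_two : {σ : Perm α | σ.support.card = 2}.InjOn support := by
  intro σ hσ τ hτ h
  obtain ⟨a, ha⟩ : σ.support.Nonempty := Finset.card_pos.1 (by rw [hσ.out]; norm_num)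
  obtain ⟨b, hb, rfl⟩ := mem_swapsAt_of_mem_support hσ ha
  obtain ⟨c, hc, rfl⟩ := mem_swapsAt_of_mem_support hτ (h ▸ ha)
  rw [support_swap hb.symm, support_swap hc.symm] at h
  have hbc : b ∈ ({a, c} : Finset α) := h ▸ Finset.mem_insert_of_mem (Finset.mem_singleton_self b)
  rw [Finset.mem_insert, Finset.mem_singleton, or_iff_right hb] at hbc
  rw [hbc]

end Swaps

lemma exists_forall_mem_of_intersecting_of_sized_two {α : Type*} [DecidableEq α]
    {𝒜 : Set (Finset α)} (hint : 𝒜.Intersecting) (h2 : 𝒜.Sized 2) (hcard : 4 ≤ 𝒜.ncard) :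
    ∃ p, ∀ A ∈ 𝒜, p ∈ A := by
  have eq_pair {A : Finset α} (hA : A ∈ 𝒜) {x y : α} (hx : x ∈ A) (hy : y ∈ A) (hxy : x ≠ y) :
      A = {x, y} :=
    (Finset.eq_of_subset_of_card_le (by grind) (by rw [h2 hA, Finset.card_pair hxy])).symm
  have exists_eq_pair {A : Finset α} (hA : A ∈ 𝒜) {x : α} (hx : x ∈ A) :
      ∃ y, x ≠ y ∧ A = {x, y} := by
    obtain ⟨y, hy, hyx⟩ := Finset.exists_mem_ne (by rw [h2 hA]; norm_num) x
    exact ⟨y, hyx.symm, eq_pair hA hx hy hyx.symm⟩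
  obtain ⟨A, hA, B, hB, hAB⟩ :=
    (Set.one_lt_ncard_iff_nontrivial_and_finite.1 (by omega : 1 < 𝒜.ncard)).1
  obtain ⟨p, hpA, hpB⟩ := Finset.not_disjoint_iff.1 (hint hA hB)
  by_contra! hno
  obtain ⟨C, hC, hpC⟩ := hno p
  obtain ⟨a, hpa, rfl⟩ := exists_eq_pair hA hpA
  obtain ⟨b, hpb, rfl⟩ := exists_eq_pair hB hpB
  have hab : a ≠ b := fun h => hAB (by rw [h])
  have haC : a ∈ C := by simpa [hpC] using hint hA hC
  have hbC : b ∈ C := by simpa [hpC] using hint hB hC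
  obtain rfl := eq_pair hC haC hbC hab
  have htriangle : 𝒜 ⊆ {{p, a}, {p, b}, {a, b}} := by
    intro D hD
    have hpaD : p ∈ D ∨ a ∈ D := by simpa [or_iff_not_imp_left] using hint hA hD
    have hpbD : p ∈ D ∨ b ∈ D := by simpa [or_iff_not_imp_left] using hint hB hD
    have habD : a ∈ D ∨ b ∈ D := by simpa [or_iff_not_imp_left] using hint hC hD
    grind
  have hle : 𝒜.ncard ≤ 3 := (Set.ncard_le_ncard htriangle).trans (ncard_triple_le _ _ _)
  omega

namespace IsTotallySymmetric

variable {α : Type*} [Fintype α] [DecidableEq α] {X : Set (Perm α)}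

lemma ncard_mul_card_support_le_of_disjoint (hX : IsTotallySymmetric X) {x y : Perm α}
    (hx : x ∈ X) (hy : y ∈ X) (hxy : x ≠ y) (hdisj : Disjoint x.support y.support) :
    X.ncard * x.support.card ≤ Fintype.card α := by
  have hpairwise : X.PairwiseDisjoint support := by
    intro x' hx' y' hy' hxy'
    obtain ⟨g, rfl, rfl⟩ := hX.exists_conj_eq_and_conj_eq hx hy hx' hy' hxy hxy'
    simpa only [Function.onFun, support_conj, Finset.disjoint_map] using hdisj
  have hcard (z) (hz : z ∈ X) : z.support.card = x.support.card := by
    obtain rfl | hzx := eq_or_ne z x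
    · rfl
    obtain ⟨g, -, rfl⟩ := hX.exists_conj_eq_and_conj_eq hz hx hx hz hzx hzx.symm
    exact card_support_conj
  classical
  calc X.ncard * x.support.card = ∑ z ∈ X.toFinset, z.support.card := by
        rw [Finset.sum_congr rfl fun z hz => hcard z (Set.mem_toFinset.1 hz), Finset.sum_const,
          smul_eq_mul, Set.ncard_eq_toFinset_card']
    _ = (X.toFinset.biUnion support).card :=
        (Finset.card_biUnion (by simpa only [Set.coe_toFinset] using hpairwise)).symm
    _ ≤ Fintype.card α := Finset.card_le_univ _

lemma card_support_eq_two (hX : IsTotallySymmetric X) (hα : 5 ≤ Fintype.card α)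
    (hα6 : Fintype.card α ≠ 6) (hcard : Fintype.card α ≤ X.ncard + 1) {x : Perm α} (hx : x ∈ X) :
    x.support.card = 2 := by
  have hx1 : x ≠ 1 := by
    rintro rfl
    exact hX.one_notMem (Set.one_lt_ncard_iff_nontrivial.1 (by omega)) hx
  by_contra hne
  have h3 : 3 ≤ x.support.card := by
    have := two_le_card_support_of_ne_one hx1
    omega
  have horder : 2 ≤ orderOf x := by
    have hpos := orderOf_pos x
    have hne1 : orderOf x ≠ 1 := orderOf_eq_one_iff.not.2 hx1
    omega
  have horder_odd (hodd : Odd x.support.card) : 3 ≤ orderOf x := by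
    have hne2 : orderOf x ≠ 2 := fun h =>
      hodd.not_two_dvd_nat (two_dvd_card_support (h ▸ pow_orderOf_eq_one x))
    omega
  refine lt_irrefl (Nat.card (centralizer {x})) ?_
  calc Nat.card (centralizer {x})
      ≤ (Fintype.card α - x.support.card)! * x.support.card‼ := card_centralizer_le x
    _ < (Fintype.card α - 2)! * orderOf x :=
        factorial_mul_doubleFactorial_lt h3 x.support.card_le_univ hα hα6 horder horder_odd
    _ ≤ (X.ncard - 1)! * orderOf x := Nat.mul_le_mul_right _ (Nat.factorial_le (by omega))
    _ ≤ Nat.card (centralizer {x}) :=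
        hX.factorial_mul_orderOf_le_card_centralizer (by omega) hx

theorem eq_swapsAt (hX : IsTotallySymmetric X) (hα : 5 ≤ Fintype.card α)
    (hα6 : Fintype.card α ≠ 6) (hcard : Fintype.card α ≤ X.ncard + 1) :
    ∃ p, X = swapsAt p := by
  have h2 (x) (hx : x ∈ X) : x.support.card = 2 := hX.card_support_eq_two hα hα6 hcard hx
  have hint : (support '' X).Intersecting := by
    rintro _ ⟨x, hx, rfl⟩ _ ⟨y, hy, rfl⟩ hdisj
    by_cases hxy : x = y
    · subst hxy
      rw [disjoint_self, Finset.bot_eq_empty, ← Finset.card_eq_zero, h2 x hx] at hdisj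
      norm_num at hdisj
    · have := hX.ncard_mul_card_support_le_of_disjoint hx hy hxy hdisj
      rw [h2 x hx] at this
      omega
  have hncard : (support '' X).ncard = X.ncard :=
    (injOn_support_of_card_eq_two.mono h2).ncard_image
  obtain ⟨p, hp⟩ := exists_forall_mem_of_intersecting_of_sized_two hint
    (Set.forall_mem_image.2 h2) (by omega)
  have hsub : X ⊆ swapsAt p := fun x hx =>
    mem_swapsAt_of_mem_support (h2 x hx) (hp _ (Set.mem_image_of_mem _ hx))
  exact ⟨p, Set.eq_of_subset_of_ncard_le hsub ((ncard_swapsAt_le p).trans (by omega))⟩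

end IsTotallySymmetric

theorem totally_symmetric_max_conj_Xn_general {α : Type*} [Fintype α] [DecidableEq α]
    (hα : 5 ≤ Fintype.card α) (hα6 : Fintype.card α ≠ 6) (a : α) {Y : Set (Perm α)}
    (hY : IsTotallySymmetric Y) (hcard : Fintype.card α ≤ Y.ncard + 1) :
    ∃ g : Perm α, (fun x => g * x * g⁻¹) '' swapsAt a = Y := by
  obtain ⟨p, rfl⟩ := hY.eq_swapsAt hα hα6 hcard
  exact ⟨swap a p, by rw [conj_image_swapsAt, swap_apply_left]⟩

theorem totally_symmetric_max_conj_Xn (n : ℕ) (hn : 5 ≤ n) (hn6 : n ≠ 6)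
    (Y : Set (Equiv.Perm (Fin n))) (hY : IsTotallySymmetric Y) (hcard : Y.ncard = n - 1) :
    ∃ g : Equiv.Perm (Fin n),
      (fun x => g * x * g⁻¹) ''
        {σ : Equiv.Perm (Fin n) | ∃ i : Fin n, i ≠ ⟨0, by omega⟩ ∧ σ = Equiv.swap ⟨0, by omega⟩ i}
        = Y :=
  totally_symmetric_max_conj_Xn_general (by simpa using hn) (by simpa using hn6) _ hY
    (by rw [Fintype.card_fin]; omega)
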